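/- arXiv:2001.05986 — 2 statements merged into one kernel-verified Lean document; each statement's English description precedes it below -/
import Mathlib

section
/- Equip ℂ[x,x⁻¹] with the ℂ-linear operators P = X (multiplication by x) and Q = −D (negative of formal differentiation); this is the Weyl module Typ₀⁻. Then: (i) the only ℂ-subspaces U ⊆ ℂ[x,x⁻¹] with P(U) ⊆ U and Q(U) ⊆ U are 0, ℂ[x], and ℂ[x,x⁻¹]; in particular the extension 0 → ℂ[x] → ℂ[x,x⁻¹] → ℂ[x,x⁻¹]/ℂ[x] → 0 is non-split; and (ii) there is a ℂ-linear isomorphism ψ : ℂ[x,x⁻¹]/ℂ[x] → ℂ[x] with ψ∘P̄ = D∘ψ and ψ∘Q̄ = X∘ψ, i.e. the quotient is isomorphic to the Weyl module ℂ[x] with p acting as d/dx and q as x. -/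
/-- Formal differentiation `xⁿ ↦ n·xⁿ⁻¹` on the Laurent polynomial ring `ℂ[x,x⁻¹]`,
realized as finitely supported functions `ℤ →₀ ℂ` (with `xⁿ` corresponding to
`Finsupp.single n 1`). -/
noncomputable def laurentD : (ℤ →₀ ℂ) →ₗ[ℂ] (ℤ →₀ ℂ) :=
  Finsupp.lsum ℂ (fun n : ℤ => (n : ℂ) • Finsupp.lsingle (n - 1))

/-- Multiplication by `x` on the Laurent polynomial ring `ℂ[x,x⁻¹]`, realized as finitely
supported functions `ℤ →₀ ℂ`. -/
noncomputable def laurentX : (ℤ →₀ ℂ) →ₗ[ℂ] (ℤ →₀ ℂ) :=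
  Finsupp.lsum ℂ (fun n : ℤ => Finsupp.lsingle (n + 1))

/-- The subspace `ℂ[x] ⊆ ℂ[x,x⁻¹]` of (honest) polynomials: Laurent polynomials with no
negative-degree terms. -/
noncomputable def polyPart : Submodule ℂ (ℤ →₀ ℂ) where
  carrier := {f | ∀ n : ℤ, n < 0 → f n = 0}
  add_mem' := by
    intro a b ha hb n hn
    simp [ha n hn, hb n hn]
  zero_mem' := by intro n hn; simp
  smul_mem' := by
    intro c f hf n hn
    simp [hf n hn]

/-!
The Euler operator `x · d/dx` acts on `xⁿ` by the scalar `n`. These eigenvalues are distinct, so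
Lagrange interpolation in the Euler operator shows that an invariant subspace contains every
monomial occurring in any of its elements. Multiplication by `x` raises exponents without
obstruction and `d/dx` lowers them except at `x⁰`. Hence a nonzero invariant subspace contains `1`
and so `ℂ[x]`, and one containing a monomial of negative degree is everything. The quotient is
identified with `ℂ[x]` by the formal Borel transform `x⁻ᵏ⁻¹ ↦ xᵏ / k!`, whose kernel is `ℂ[x]`.
-/

open Polynomial Finsupp
open scoped Nat

theorem aeval_diagonal_apply {R ι : Type*} [CommSemiring R] {T : Module.End R (ι →₀ R)} {w : ι → R}
    (hT : ∀ f i, T f i = w i * f i) (q : R[X]) (f : ι →₀ R) (i : ι) :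
    aeval T q f i = q.eval (w i) * f i := by
  induction q using Polynomial.induction_on generalizing f with
  | C a => simp
  | add p q hp hq => simp [hp, hq, add_mul]
  | monomial n a ih =>
    rw [pow_succ, ← mul_assoc, map_mul, aeval_X, Module.End.mul_apply, ih, hT, eval_mul_X,
      mul_assoc]

theorem single_mem_of_diagonal_invariant {K ι : Type*} [Field K] {T : Module.End K (ι →₀ K)}
    {w : ι → K} (hw : Function.Injective w) (hT : ∀ f i, T f i = w i * f i)
    {U : Submodule K (ι →₀ K)} (hU : ∀ f ∈ U, T f ∈ U) {f : ι →₀ K} (hf : f ∈ U) {i : ι}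
    (hi : f i ≠ 0) : single i 1 ∈ U := by
  classical
  have interpolation : aeval T (Lagrange.basis f.support w i) f = single i (f i) := by
    ext j
    rw [aeval_diagonal_apply hT, single_apply]
    rcases eq_or_ne i j with rfl | hij
    · rw [Lagrange.eval_basis_self hw.injOn (mem_support_iff.2 hi), one_mul, if_pos rfl]
    · rw [if_neg hij]
      by_cases hj : f j = 0
      · rw [hj, mul_zero]
      · rw [Lagrange.eval_basis_of_ne hij (mem_support_iff.2 hj), zero_mul]
  have hmem : single i (f i) ∈ U :=
    interpolation ▸ aeval_apply_smul_mem_of_le_comap' hf _ T hU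
  simpa [hi] using U.smul_mem (f i)⁻¹ hmem

theorem supported_le_iff_forall_single_mem {R ι : Type*} [Semiring R] {U : Submodule R (ι →₀ R)}
    {s : Set ι} : supported R R s ≤ U ↔ ∀ i ∈ s, single i 1 ∈ U := by
  rw [supported_eq_span_single, Submodule.span_le, Set.image_subset_iff]
  rfl

theorem laurentX_single (n : ℤ) (c : ℂ) : laurentX (single n c) = single (n + 1) c := by
  simp [laurentX]

theorem laurentD_single (n : ℤ) (c : ℂ) : laurentD (single n c) = single (n - 1) (n * c) := by
  simp [laurentD]

theorem laurentX_apply (f : ℤ →₀ ℂ) (n : ℤ) : laurentX f n = f (n - 1) := by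
  induction f using Finsupp.induction_linear with
  | zero => simp
  | add f g hf hg => simp [hf, hg]
  | single m c => simp [laurentX_single, single_apply, eq_sub_iff_add_eq]

theorem laurentD_apply (f : ℤ →₀ ℂ) (n : ℤ) : laurentD f n = (n + 1) * f (n + 1) := by
  induction f using Finsupp.induction_linear with
  | zero => simp
  | add f g hf hg => simp [hf, hg, mul_add]
  | single m c =>
    rw [laurentD_single, single_apply, single_apply]
    rcases eq_or_ne m (n + 1) with rfl | hm
    · simp
    · rw [if_neg hm, if_neg (by lia), mul_zero]

theorem laurentX_laurentD_apply (f : ℤ →₀ ℂ) (n : ℤ) : laurentX (laurentD f) n = n * f n := by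
  simp [laurentX_apply, laurentD_apply]

theorem polyPart_eq_supported : polyPart = supported ℂ ℂ (Set.Ici 0) := by
  ext f
  simp only [mem_supported', Set.mem_Ici, not_le]
  rfl

theorem single_one_mem_polyPart_iff {n : ℤ} : single n (1 : ℂ) ∈ polyPart ↔ 0 ≤ n := by
  simp [polyPart_eq_supported, mem_supported]

theorem polyPart_ne_bot : polyPart ≠ ⊥ := by
  intro h
  have one_mem : single 0 (1 : ℂ) ∈ polyPart := single_one_mem_polyPart_iff.2 le_rfl
  simp [h] at one_mem

theorem polyPart_ne_top : polyPart ≠ ⊤ := by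
  intro h
  have inv_mem : single (-1) (1 : ℂ) ∈ polyPart := h ▸ Submodule.mem_top
  simp [single_one_mem_polyPart_iff] at inv_mem

section InvariantSubspaces

variable {U : Submodule ℂ (ℤ →₀ ℂ)}

theorem single_mem_of_mem_of_laurentX_laurentD_invariant (hX : ∀ f ∈ U, laurentX f ∈ U)
    (hD : ∀ f ∈ U, laurentD f ∈ U) {f : ℤ →₀ ℂ} (hf : f ∈ U) {n : ℤ} (hn : f n ≠ 0) :
    single n 1 ∈ U :=
  single_mem_of_diagonal_invariant (T := laurentX ∘ₗ laurentD) Int.cast_injective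
    laurentX_laurentD_apply (fun g hg => hX _ (hD g hg)) hf hn

theorem single_mem_of_le_of_laurentX_invariant (hX : ∀ f ∈ U, laurentX f ∈ U) {n m : ℤ}
    (hn : single n 1 ∈ U) (hnm : n ≤ m) : single m 1 ∈ U := by
  induction m, hnm using Int.leInduction with
  | base => exact hn
  | succ m _ ih => exact laurentX_single m 1 ▸ hX _ ih

theorem single_mem_of_ge_of_laurentD_invariant (hD : ∀ f ∈ U, laurentD f ∈ U) {n m : ℤ}
    (hn : single n 1 ∈ U) (hmn : m ≤ n) (h0 : 0 ∉ Set.Ioc m n) : single m 1 ∈ U := by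
  induction m, hmn using Int.leInductionDown with
  | base => exact hn
  | pred m hmn ih =>
    simp only [Set.mem_Ioc] at h0 ih
    have m_ne_zero : (m : ℂ) ≠ 0 := by
      rw [Int.cast_ne_zero]
      lia
    have derivative_mem : laurentD (single m 1) ∈ U := hD _ (ih (by lia))
    simpa [laurentD_single, m_ne_zero] using U.smul_mem (m : ℂ)⁻¹ derivative_mem

theorem polyPart_le_of_ne_bot (hX : ∀ f ∈ U, laurentX f ∈ U) (hD : ∀ f ∈ U, laurentD f ∈ U)
    (hU : U ≠ ⊥) : polyPart ≤ U := by
  obtain ⟨f, hf, f_ne_zero⟩ := U.ne_bot_iff.1 hU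
  obtain ⟨n, hfn⟩ := Finsupp.ne_iff.1 f_ne_zero
  have hn : single n 1 ∈ U := single_mem_of_mem_of_laurentX_laurentD_invariant hX hD hf hfn
  have one_mem : single 0 1 ∈ U := by
    rcases le_total n 0 with h | h
    · exact single_mem_of_le_of_laurentX_invariant hX hn h
    · exact single_mem_of_ge_of_laurentD_invariant hD hn h (by simp)
  rw [polyPart_eq_supported, supported_le_iff_forall_single_mem]
  exact fun m hm => single_mem_of_le_of_laurentX_invariant hX one_mem hm

theorem eq_top_of_not_le_polyPart (hX : ∀ f ∈ U, laurentX f ∈ U) (hD : ∀ f ∈ U, laurentD f ∈ U)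
    (hU : ¬U ≤ polyPart) : U = ⊤ := by
  obtain ⟨f, hf, f_notMem⟩ := SetLike.not_le_iff_exists.1 hU
  obtain ⟨n, n_neg, hfn⟩ : ∃ n < 0, f n ≠ 0 := by
    simpa [polyPart_eq_supported, mem_supported'] using f_notMem
  have hn : single n 1 ∈ U := single_mem_of_mem_of_laurentX_laurentD_invariant hX hD hf hfn
  rw [eq_top_iff, ← supported_univ, supported_le_iff_forall_single_mem]
  intro m _
  rcases le_total n m with h | h
  · exact single_mem_of_le_of_laurentX_invariant hX hn h
  · exact single_mem_of_ge_of_laurentD_invariant hD hn h fun h0 => n_neg.not_ge h0.2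

theorem eq_bot_or_eq_polyPart_or_eq_top (hX : ∀ f ∈ U, laurentX f ∈ U)
    (hD : ∀ f ∈ U, laurentD f ∈ U) : U = ⊥ ∨ U = polyPart ∨ U = ⊤ := by
  by_cases hbot : U = ⊥
  · exact .inl hbot
  by_cases hle : U ≤ polyPart
  · exact .inr (.inl (hle.antisymm (polyPart_le_of_ne_bot hX hD hbot)))
  · exact .inr (.inr (eq_top_of_not_le_polyPart hX hD hle))

theorem not_isCompl_polyPart (hX : ∀ f ∈ U, laurentX f ∈ U) (hD : ∀ f ∈ U, laurentD f ∈ U) :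
    ¬IsCompl polyPart U := by
  intro hcompl
  rcases eq_or_ne U ⊥ with rfl | hbot
  · exact polyPart_ne_top (eq_top_of_isCompl_bot hcompl)
  · exact polyPart_ne_bot (hcompl.disjoint.eq_bot_of_le (polyPart_le_of_ne_bot hX hD hbot))

end InvariantSubspaces

/-- The formal Borel transform at infinity: the linear map `ℂ[x,x⁻¹] → ℂ[x]` that sends `x⁻ᵏ⁻¹` to
`xᵏ / k!` and kills `ℂ[x]`. It turns multiplication by `x` into differentiation, and `-d/dx` into
multiplication by `x`. The exponent `-k - 1` is written `Int.negSucc k`. -/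
noncomputable def borelTransform : (ℤ →₀ ℂ) →ₗ[ℂ] ℂ[X] :=
  Finsupp.lsum ℂ fun
    | Int.ofNat _ => 0
    | Int.negSucc k => (k ! : ℂ)⁻¹ • monomial k

theorem borelTransform_single_negSucc (k : ℕ) (c : ℂ) :
    borelTransform (single (Int.negSucc k) c) = monomial k ((k ! : ℂ)⁻¹ * c) := by
  simp [borelTransform, smul_monomial]

theorem coeff_borelTransform (f : ℤ →₀ ℂ) (k : ℕ) :
    (borelTransform f).coeff k = (k ! : ℂ)⁻¹ * f (Int.negSucc k) := by
  induction f using Finsupp.induction_linear with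
  | zero => simp
  | add f g hf hg => simp [hf, hg, mul_add]
  | single m c =>
    cases m with
    | ofNat n => simp [borelTransform]
    | negSucc n =>
      rw [borelTransform_single_negSucc, coeff_monomial]
      rcases eq_or_ne n k with rfl | hnk <;> simp [*]

theorem ker_borelTransform : LinearMap.ker borelTransform = polyPart := by
  ext f
  have mem_polyPart_iff : f ∈ polyPart ↔ ∀ k : ℕ, f (Int.negSucc k) = 0 := by
    refine ⟨fun hf k => hf _ (Int.negSucc_lt_zero k), fun hf n hn => ?_⟩
    obtain ⟨k, rfl⟩ := Int.eq_negSucc_of_lt_zero hn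
    exact hf k
  simp [mem_polyPart_iff, Polynomial.ext_iff, coeff_borelTransform, Nat.factorial_ne_zero]

theorem borelTransform_surjective : Function.Surjective borelTransform := by
  intro p
  induction p using Polynomial.induction_on' with
  | add p q hp hq =>
    obtain ⟨f, rfl⟩ := hp
    obtain ⟨g, rfl⟩ := hq
    exact ⟨f + g, map_add _ _ _⟩
  | monomial k a =>
    have factorial_ne_zero : (k ! : ℂ) ≠ 0 := Nat.cast_ne_zero.2 k.factorial_ne_zero
    exact ⟨single (Int.negSucc k) (k ! * a),
      by rw [borelTransform_single_negSucc, inv_mul_cancel_left₀ factorial_ne_zero]⟩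

theorem borelTransform_laurentX (f : ℤ →₀ ℂ) :
    borelTransform (laurentX f) = derivative (borelTransform f) := by
  ext k
  have factorial_ratio : ((k + 1)! : ℂ)⁻¹ * (k + 1) = (k ! : ℂ)⁻¹ := by
    have : (k : ℂ) + 1 ≠ 0 := k.cast_add_one_ne_zero
    rw [Nat.factorial_succ]
    push_cast
    field_simp
  rw [coeff_derivative, coeff_borelTransform, coeff_borelTransform, laurentX_apply,
    Int.negSucc_sub_one, mul_right_comm, factorial_ratio]

theorem borelTransform_neg_laurentD (f : ℤ →₀ ℂ) :
    borelTransform (-laurentD f) = X * borelTransform f := by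
  ext k
  rw [coeff_borelTransform, Finsupp.neg_apply, laurentD_apply]
  cases k with
  | zero => simp
  | succ k =>
    have exponent : Int.negSucc (k + 1) + 1 = Int.negSucc k := rfl
    have : (k : ℂ) + 1 ≠ 0 := k.cast_add_one_ne_zero
    rw [coeff_X_mul, coeff_borelTransform, exponent, Nat.factorial_succ, Int.cast_negSucc]
    push_cast
    field_simp
    ring

/-- The isomorphism `ℂ[x,x⁻¹]/ℂ[x] ≃ ℂ[x]` induced by the Borel transform. -/
noncomputable def quotientPolyPartEquiv : ((ℤ →₀ ℂ) ⧸ polyPart) ≃ₗ[ℂ] ℂ[X] :=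
  Submodule.quotEquivOfEq _ _ ker_borelTransform.symm ≪≫ₗ
    borelTransform.quotKerEquivOfSurjective borelTransform_surjective

theorem quotientPolyPartEquiv_mk (f : ℤ →₀ ℂ) :
    quotientPolyPartEquiv (Submodule.Quotient.mk f) = borelTransform f :=
  rfl

/-- The Weyl module `Typ₀⁻`: `ℂ[x,x⁻¹]` with `P = X` (multiplication by `x`) and `Q = −D`
(negative of differentiation).  (i) The only `(P,Q)`-invariant subspaces are `0`, `ℂ[x]`
and `ℂ[x,x⁻¹]`; in particular the extension `0 → ℂ[x] → ℂ[x,x⁻¹] → ℂ[x,x⁻¹]/ℂ[x] → 0` is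
non-split.  (ii) The quotient by `ℂ[x]` is isomorphic to the Weyl module `ℂ[x]` with `p`
acting as `d/dx` and `q` as `x`. -/
theorem laurent_conjugate_weyl_module_classification :
    (∀ U : Submodule ℂ (ℤ →₀ ℂ),
        (∀ f ∈ U, laurentX f ∈ U) → (∀ f ∈ U, - laurentD f ∈ U) →
        U = ⊥ ∨ U = polyPart ∨ U = ⊤) ∧
    (¬ ∃ V : Submodule ℂ (ℤ →₀ ℂ),
        (∀ f ∈ V, laurentX f ∈ V) ∧ (∀ f ∈ V, - laurentD f ∈ V) ∧ IsCompl polyPart V) ∧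
    (∃ ψ : ((ℤ →₀ ℂ) ⧸ polyPart) ≃ₗ[ℂ] Polynomial ℂ,
      (∀ f : ℤ →₀ ℂ,
        ψ (Submodule.Quotient.mk (laurentX f)) =
          Polynomial.derivative (ψ (Submodule.Quotient.mk f))) ∧
      (∀ f : ℤ →₀ ℂ,
        ψ (Submodule.Quotient.mk (- laurentD f)) =
          Polynomial.X * ψ (Submodule.Quotient.mk f))) := by
  refine ⟨fun U hP hQ => eq_bot_or_eq_polyPart_or_eq_top hP fun f hf => neg_mem_iff.1 (hQ f hf),
    ?_, quotientPolyPartEquiv, fun f => ?_, fun f => ?_⟩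
  · rintro ⟨V, hP, hQ, hcompl⟩
    exact not_isCompl_polyPart hP (fun f hf => neg_mem_iff.1 (hQ f hf)) hcompl
  · simp only [quotientPolyPartEquiv_mk, borelTransform_laurentX]
  · simp only [quotientPolyPartEquiv_mk, borelTransform_neg_laurentD]
end

section
/- For every real j with 0 < j < 1: Σ_{n=0}^{∞} [((−j)_n (j)_n)/(n!)²]·(1/2)ⁿ = (1/2)·( Σ_{n=0}^{∞} [((1−j)_n (j)_n)/(n!)²]·(1/2)ⁿ + Σ_{n=0}^{∞} [((−j)_n (1+j)_n)/(n!)²]·(1/2)ⁿ ) = (√π/2)·( 1/(Γ(1 − j/2)Γ((1+j)/2)) + 1/(Γ((1−j)/2)Γ(1 + j/2)) ), and in particular ₂F₁(−j, j; 1; 1/2) = Σ_{n=0}^{∞} [((−j)_n (j)_n)/(n!)²]·(1/2)ⁿ is strictly positive (hence nonzero). -/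
open Real

open Filter Polynomial Bornology
open scoped Topology Nat

/-!
The contiguous relation writes `₂F₁(-j, j; 1; 1/2)` as the mean of two values of the form
`F(c) = ₂F₁(a, 1 - a; c; 1/2)` at `c = 1`, with `a = j` and `a = -j`, and these are given by
Bailey's theorem. To prove the latter, a Wilf–Zeilberger certificate gives
`(c + a) (c + 1 - a) F(c + 2) = c (c + 1) F(c)`, and `F(c) → 1` as `Re c → ∞`. Iterating the
recurrence expresses `F(c)` as a limit of quotients of Pochhammer symbols, which Euler's limit
formula for `1 / Γ` turns into a quotient of Gamma values. For `|j| < 1` every Gamma argument in the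
resulting formula is positive.
-/

section Pochhammer

theorem mul_eval_ascPochhammer_add_one {R : Type*} [CommSemiring R] (x : R) (n : ℕ) :
    x * (ascPochhammer R n).eval (x + 1) = (ascPochhammer R n).eval x * (x + n) := by
  rw [← ascPochhammer_succ_eval, ascPochhammer_succ_left]
  simp

theorem eval_ascPochhammer_eq_prod_range {R : Type*} [CommSemiring R] (x : R) (n : ℕ) :
    (ascPochhammer R n).eval x = ∏ k ∈ Finset.range n, (x + k) := by
  induction n with
  | zero => simp
  | succ n ih => rw [ascPochhammer_succ_eval, ih, Finset.prod_range_succ]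

theorem eval_ascPochhammer_ne_zero {R : Type*} [CommRing R] [IsDomain R] {c : R}
    (hc : ∀ k : ℕ, c ≠ -k) (n : ℕ) :
    (ascPochhammer R n).eval c ≠ 0 := by
  rw [Ne, ascPochhammer_eval_eq_zero_iff]
  rintro ⟨k, -, hk⟩
  exact hc k (by rw [hk, neg_neg])

variable {𝕜 : Type*} [RCLike 𝕜]

theorem factorial_le_norm_eval_ascPochhammer {c : 𝕜} (hc : 1 ≤ RCLike.re c) (n : ℕ) :
    (n ! : ℝ) ≤ ‖(ascPochhammer 𝕜 n).eval c‖ := by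
  induction n with
  | zero => simp
  | succ n ih =>
    have hn : (n + 1 : ℝ) ≤ ‖c + n‖ := calc
      (n + 1 : ℝ) ≤ RCLike.re (c + n) := by
        rw [map_add, RCLike.natCast_re]
        linarith
      _ ≤ ‖c + n‖ := RCLike.re_le_norm _
    rw [ascPochhammer_succ_eval, norm_mul, Nat.factorial_succ, mul_comm, Nat.cast_mul,
      Nat.cast_succ]
    gcongr

theorem tendsto_inv_eval_ascPochhammer_cobounded {n : ℕ} (hn : n ≠ 0) :
    Tendsto (fun c : 𝕜 ↦ ((ascPochhammer 𝕜 n).eval c)⁻¹) (cobounded 𝕜) (𝓝 0) := by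
  have hdeg : 0 < (ascPochhammer 𝕜 n).degree := by
    rw [← natDegree_pos_iff_degree_pos, ascPochhammer_natDegree]
    exact Nat.pos_of_ne_zero hn
  exact tendsto_inv₀_cobounded.comp <| tendsto_norm_atTop_iff_cobounded.1 <|
    tendsto_norm_atTop _ hdeg tendsto_norm_cobounded_atTop

end Pochhammer

section Hypergeometric

variable {𝕜 : Type*} [RCLike 𝕜] (a b c : 𝕜) {x : 𝕜}

theorem norm_one_half_lt_one : ‖(1 / 2 : 𝕜)‖ < 1 := by
  norm_num

theorem one_le_radius_ordinaryHypergeometricSeries :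
    1 ≤ (ordinaryHypergeometricSeries 𝕜 a b c).radius := by
  by_cases! habc : ∀ k : ℕ, (k : 𝕜) ≠ -a ∧ (k : 𝕜) ≠ -b ∧ (k : 𝕜) ≠ -c
  · exact (ordinaryHypergeometricSeries_radius_eq_one 𝕜 a b c habc).ge
  · obtain ⟨k, hk⟩ := habc
    suffices (ordinaryHypergeometricSeries 𝕜 a b c).radius = ⊤ from this ▸ le_top
    refine FormalMultilinearSeries.radius_eq_top_of_forall_image_add_eq_zero _ (k + 1) fun n ↦ ?_
    exact ordinaryHypergeometricSeries_eq_zero_of_neg_nat a b c (by tauto) (by lia)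

theorem hasSum_ordinaryHypergeometric (hx : ‖x‖ < 1) :
    HasSum (fun n ↦ ordinaryHypergeometricCoefficient a b c n * x ^ n) (₂F₁ a b c x) := by
  have hmem : x ∈ Metric.eball 0 (ordinaryHypergeometricSeries 𝕜 a b c).radius := by
    refine Metric.eball_subset_eball (one_le_radius_ordinaryHypergeometricSeries a b c) ?_
    simpa [← ofReal_norm] using hx
  simpa only [ordinaryHypergeometricSeries_apply_eq, smul_eq_mul] using!
    FormalMultilinearSeries.hasSum _ hmem

theorem ordinaryHypergeometric_comm (x : 𝕜) : ₂F₁ a b c x = ₂F₁ b a c x := by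
  rw [ordinaryHypergeometric, ordinaryHypergeometricSeries_symm, ← ordinaryHypergeometric]

theorem ordinaryHypergeometric_zero_right (x : 𝕜) : ₂F₁ a 0 c x = 1 := by
  rw [ordinaryHypergeometric_eq_tsum]
  simp only [ascPochhammer_eval_zero]
  rw [tsum_eq_single 0 fun n hn ↦ by simp [hn]]
  simp

theorem ordinaryHypergeometric_one_right_eq_tsum (x : 𝕜) :
    ₂F₁ a b 1 x = ∑' n : ℕ,
      (ascPochhammer 𝕜 n).eval a * (ascPochhammer 𝕜 n).eval b / (n ! : 𝕜) ^ 2 * x ^ n := by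
  rw [ordinaryHypergeometric_eq_tsum]
  refine tsum_congr fun n ↦ ?_
  rw [ascPochhammer_eval_one, smul_eq_mul]
  ring

theorem sub_mul_ordinaryHypergeometric (hx : ‖x‖ < 1) :
    (a - b) * ₂F₁ a b c x = a * ₂F₁ (a + 1) b c x - b * ₂F₁ a (b + 1) c x := by
  refine ((hasSum_ordinaryHypergeometric a b c hx).mul_left (a - b)).unique ?_
  convert! ((hasSum_ordinaryHypergeometric (a + 1) b c hx).mul_left a).sub
    ((hasSum_ordinaryHypergeometric a (b + 1) c hx).mul_left b) using 2 with n
  linear_combination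
    -(n !⁻¹ : 𝕜) * (ascPochhammer 𝕜 n).eval b * ((ascPochhammer 𝕜 n).eval c)⁻¹ * x ^ n *
        mul_eval_ascPochhammer_add_one a n +
      (n !⁻¹ : 𝕜) * (ascPochhammer 𝕜 n).eval a * ((ascPochhammer 𝕜 n).eval c)⁻¹ * x ^ n *
        mul_eval_ascPochhammer_add_one b n

theorem ordinaryHypergeometric_neg_self (hx : ‖x‖ < 1) :
    ₂F₁ (-b) b c x = 1 / 2 * (₂F₁ (1 - b) b c x + ₂F₁ (-b) (1 + b) c x) := by
  rcases eq_or_ne b 0 with rfl | hb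
  · rw [neg_zero, ordinaryHypergeometric_comm 0 (1 + 0)]
    simp only [ordinaryHypergeometric_zero_right]
    norm_num
  · have hcontig := sub_mul_ordinaryHypergeometric (-b) b c hx
    rw [neg_add_eq_sub, add_comm b] at hcontig
    apply mul_left_cancel₀ hb
    linear_combination -hcontig / 2

theorem norm_ordinaryHypergeometricCoefficient_le {c : 𝕜} (hc : 1 ≤ RCLike.re c) (n : ℕ) :
    ‖ordinaryHypergeometricCoefficient a b c n‖ ≤ ‖ordinaryHypergeometricCoefficient a b 1 n‖ := by
  simp only [ordinaryHypergeometricCoefficient, norm_mul, norm_inv, ascPochhammer_eval_one,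
    RCLike.norm_natCast]
  gcongr
  exact factorial_le_norm_eval_ascPochhammer hc n

theorem tendsto_ordinaryHypergeometric_comap_re_atTop (hx : ‖x‖ < 1) :
    Tendsto (fun c ↦ ₂F₁ a b c x) (comap RCLike.re atTop) (𝓝 1) := by
  have hcob : comap RCLike.re atTop ≤ cobounded 𝕜 := by
    rw [← comap_norm_atTop]
    exact tendsto_iff_comap.1 (tendsto_atTop_mono RCLike.re_le_norm tendsto_comap)
  have hterm (n : ℕ) : Tendsto (fun c ↦ ordinaryHypergeometricCoefficient a b c n * x ^ n)
      (comap RCLike.re atTop) (𝓝 (if n = 0 then 1 else 0)) := by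
    rcases eq_or_ne n 0 with rfl | hn
    · simpa [ordinaryHypergeometricCoefficient] using tendsto_const_nhds
    · simpa [hn] using (((tendsto_inv_eval_ascPochhammer_cobounded hn).mono_left hcob).const_mul
        ((n !⁻¹ : 𝕜) * (ascPochhammer 𝕜 n).eval a * (ascPochhammer 𝕜 n).eval b)).mul_const (x ^ n)
  have hbound : ∀ᶠ c : 𝕜 in comap RCLike.re atTop, ∀ n,
      ‖ordinaryHypergeometricCoefficient a b c n * x ^ n‖ ≤
        ‖ordinaryHypergeometricCoefficient a b 1 n * x ^ n‖ := by
    filter_upwards [tendsto_comap.eventually_ge_atTop 1] with c hc n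
    simpa only [norm_mul _ (x ^ n)] using mul_le_mul_of_nonneg_right
      (norm_ordinaryHypergeometricCoefficient_le a b hc n) (norm_nonneg (x ^ n))
  have hlim := tendsto_tsum_of_dominated_convergence
    (hasSum_ordinaryHypergeometric a b 1 hx).summable.norm hterm hbound
  simpa only [tsum_ite_eq, (hasSum_ordinaryHypergeometric _ _ _ hx).tsum_eq] using hlim

theorem tendsto_add_natCast_comap_re_atTop :
    Tendsto (fun n : ℕ ↦ c + n) atTop (comap RCLike.re atTop) := by
  rw [tendsto_comap_iff]
  simpa [Function.comp_def] using
    tendsto_atTop_add_const_left _ (RCLike.re c) tendsto_natCast_atTop_atTop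

variable {c}

/-- The antidifference `G` of the Wilf–Zeilberger pair behind the recurrence
`(c + a) (c + 1 - a) F(c + 2) = c (c + 1) F(c)` for `F(c) = ₂F₁(a, 1 - a; c; 1/2)`: the difference
of the two `n`-th terms is `G (n + 1) - G n`. -/
noncomputable def baileyCertificate (a c : 𝕜) (n : ℕ) : 𝕜 :=
  2 * c * (c + 1) * (n / (n + c)) * (ordinaryHypergeometricCoefficient a (1 - a) c n * (1 / 2) ^ n)

theorem baileyCertificate_succ_sub (hc : ∀ k : ℕ, c ≠ -k) (n : ℕ) :
    baileyCertificate a c (n + 1) - baileyCertificate a c n =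
      (c + a) * (c + 1 - a) *
          (ordinaryHypergeometricCoefficient a (1 - a) (c + 2) n * (1 / 2) ^ n) -
        c * (c + 1) * (ordinaryHypergeometricCoefficient a (1 - a) c n * (1 / 2) ^ n) := by
  have hadd (k : ℕ) : c + k ≠ 0 := fun h ↦ hc k (eq_neg_of_add_eq_zero_left h)
  have hc0 : c ≠ 0 := by simpa using hadd 0
  have hc1 : c + 1 ≠ 0 := by simpa using hadd 1
  have hcn : n + c ≠ 0 := by simpa [add_comm] using hadd n
  have hcn1 : n + 1 + c ≠ 0 := by simpa [add_comm, add_left_comm] using hadd (n + 1)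
  have hpoch := eval_ascPochhammer_ne_zero hc n
  have hshift : (ascPochhammer 𝕜 n).eval (c + 2) =
      (ascPochhammer 𝕜 n).eval c * (n + c) * (n + 1 + c) / (c * (c + 1)) := by
    have h₁ := mul_eval_ascPochhammer_add_one c n
    have h₂ := mul_eval_ascPochhammer_add_one (c + 1) n
    rw [add_assoc, one_add_one_eq_two] at h₂
    rw [eq_div_iff (mul_ne_zero hc0 hc1)]
    linear_combination c * h₂ + (c + 1 + n) * h₁
  have hfac : (n ! : 𝕜) ≠ 0 := Nat.cast_ne_zero.2 n.factorial_ne_zero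
  have hn1 : (n + 1 : 𝕜) ≠ 0 := Nat.cast_add_one_ne_zero n
  simp only [baileyCertificate, ordinaryHypergeometricCoefficient, hshift, ascPochhammer_succ_eval,
    Nat.factorial_succ, pow_succ, Nat.cast_mul, Nat.cast_succ, add_comm c (n : 𝕜)]
  field_simp
  ring

theorem tendsto_baileyCertificate : Tendsto (baileyCertificate a c) atTop (𝓝 0) := by
  have hterm := (hasSum_ordinaryHypergeometric a (1 - a) c norm_one_half_lt_one)
    |>.summable.tendsto_atTop_zero
  simpa only [mul_zero] using!
    ((tendsto_natCast_div_add_atTop c).const_mul (2 * c * (c + 1))).mul hterm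

theorem ordinaryHypergeometric_one_half_add_two (hc : ∀ k : ℕ, c ≠ -k) :
    (c + a) * (c + 1 - a) * ₂F₁ a (1 - a) (c + 2) (1 / 2 : 𝕜) =
      c * (c + 1) * ₂F₁ a (1 - a) c (1 / 2 : 𝕜) := by
  have hsum := ((hasSum_ordinaryHypergeometric a (1 - a) (c + 2) norm_one_half_lt_one).mul_left
    ((c + a) * (c + 1 - a))).sub
      ((hasSum_ordinaryHypergeometric a (1 - a) c norm_one_half_lt_one).mul_left (c * (c + 1)))
  have hpartial := hsum.tendsto_sum_nat
  simp only [← baileyCertificate_succ_sub a hc, Finset.sum_range_sub] at hpartial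
  have hzero : baileyCertificate a c 0 = 0 := by simp [baileyCertificate]
  rw [← sub_eq_zero]
  refine tendsto_nhds_unique hpartial ?_
  simpa only [hzero, sub_zero] using tendsto_baileyCertificate a

theorem ordinaryHypergeometric_one_half_mul_eval_ascPochhammer (hc : ∀ k : ℕ, c ≠ -k) (n : ℕ) :
    ₂F₁ a (1 - a) c (1 / 2 : 𝕜) *
        ((ascPochhammer 𝕜 n).eval (c / 2) * (ascPochhammer 𝕜 n).eval ((c + 1) / 2)) =
      ₂F₁ a (1 - a) (c + (2 * n : ℕ)) (1 / 2 : 𝕜) *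
        ((ascPochhammer 𝕜 n).eval ((c + a) / 2) *
          (ascPochhammer 𝕜 n).eval ((c + 1 - a) / 2)) := by
  induction n with
  | zero => simp
  | succ n ih =>
    have hshift (k : ℕ) : c + (2 * n : ℕ) ≠ -k := fun hk ↦ hc (k + 2 * n) <| by
      push_cast at hk ⊢
      linear_combination hk
    have hrec := ordinaryHypergeometric_one_half_add_two a hshift
    rw [show c + (2 * n : ℕ) + 2 = c + (2 * (n + 1) : ℕ) by push_cast; ring] at hrec
    simp only [ascPochhammer_succ_eval]
    push_cast at hrec ih ⊢
    linear_combination (c / 2 + n) * ((c + 1) / 2 + n) * ih -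
      (ascPochhammer 𝕜 n).eval ((c + a) / 2) * (ascPochhammer 𝕜 n).eval ((c + 1 - a) / 2) / 4 * hrec

end Hypergeometric

section Gamma

-- Mathlib's `Γ` is `0` at its poles, so `Γ⁻¹` is the entire reciprocal Gamma function there too.
theorem tendsto_eval_ascPochhammer_div_inv_Gamma (s : ℂ) :
    Tendsto (fun n : ℕ ↦ (ascPochhammer ℂ (n + 1)).eval s / ((n : ℂ) ^ s * n !)) atTop
      (𝓝 (Complex.Gamma s)⁻¹) := by
  by_cases! hs : ∀ m : ℕ, s ≠ -m
  · refine ((Complex.GammaSeq_tendsto_Gamma s).inv₀ (Complex.Gamma_ne_zero hs)).congr fun n ↦ ?_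
    rw [Complex.GammaSeq, inv_div, eval_ascPochhammer_eq_prod_range]
  · obtain ⟨m, rfl⟩ := hs
    rw [Complex.Gamma_neg_nat_eq_zero, inv_zero]
    refine tendsto_const_nhds.congr' ?_
    filter_upwards [eventually_ge_atTop m] with n hn
    rw [ascPochhammer_eval_neg_coe_nat_of_lt (Nat.lt_succ_of_le hn), zero_div]

theorem tendsto_eval_ascPochhammer_mul_div_inv_Gamma_mul (s t : ℂ) :
    Tendsto (fun n : ℕ ↦ (ascPochhammer ℂ (n + 1)).eval s * (ascPochhammer ℂ (n + 1)).eval t /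
      ((n : ℂ) ^ (s + t) * (n ! : ℂ) ^ 2)) atTop (𝓝 (Complex.Gamma s * Complex.Gamma t)⁻¹) := by
  rw [mul_inv]
  refine ((tendsto_eval_ascPochhammer_div_inv_Gamma s).mul
    (tendsto_eval_ascPochhammer_div_inv_Gamma t)).congr' ?_
  filter_upwards [eventually_ne_atTop 0] with n hn
  rw [Complex.cpow_add _ _ (Nat.cast_ne_zero.2 hn), div_mul_div_comm, mul_mul_mul_comm, sq]

theorem ordinaryHypergeometric_one_half_eq_complexGamma (a : ℂ) {c : ℂ} (hc : ∀ k : ℕ, c ≠ -k) :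
    ₂F₁ a (1 - a) c (1 / 2 : ℂ) =
      Complex.Gamma (c / 2) * Complex.Gamma ((c + 1) / 2) /
        (Complex.Gamma ((c + a) / 2) * Complex.Gamma ((c + 1 - a) / 2)) := by
  have hΓ₁ : Complex.Gamma (c / 2) ≠ 0 := Complex.Gamma_ne_zero fun m hm ↦ hc (2 * m) <| by
    push_cast
    linear_combination 2 * hm
  have hΓ₂ : Complex.Gamma ((c + 1) / 2) ≠ 0 := Complex.Gamma_ne_zero fun m hm ↦
    hc (2 * m + 1) <| by
      push_cast
      linear_combination 2 * hm
  have hleft := (tendsto_eval_ascPochhammer_mul_div_inv_Gamma_mul (c / 2) ((c + 1) / 2)).const_mul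
    (₂F₁ a (1 - a) c (1 / 2 : ℂ))
  have hshift : Tendsto (fun n : ℕ ↦ c + (2 * (n + 1) : ℕ)) atTop (comap RCLike.re atTop) :=
    (tendsto_add_natCast_comap_re_atTop c).comp
      (tendsto_atTop_mono (fun n ↦ show n ≤ 2 * (n + 1) by lia) tendsto_id)
  have hright := ((tendsto_ordinaryHypergeometric_comap_re_atTop a (1 - a)
    norm_one_half_lt_one).comp hshift).mul
      (tendsto_eval_ascPochhammer_mul_div_inv_Gamma_mul ((c + a) / 2) ((c + 1 - a) / 2))
  have hexp : (c + a) / 2 + (c + 1 - a) / 2 = c / 2 + (c + 1) / 2 := by ring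
  have hlim := tendsto_nhds_unique hleft <| hright.congr fun n ↦ by
    rw [hexp, ← mul_div_assoc, ← mul_div_assoc, Function.comp_apply,
      ordinaryHypergeometric_one_half_mul_eval_ascPochhammer a hc]
  rwa [one_mul, ← div_eq_mul_inv, div_eq_iff (mul_ne_zero hΓ₁ hΓ₂), mul_comm, ← div_eq_mul_inv]
    at hlim

theorem ofReal_ordinaryHypergeometric (a b c x : ℝ) :
    ((₂F₁ a b c x : ℝ) : ℂ) = ₂F₁ (a : ℂ) (b : ℂ) (c : ℂ) (x : ℂ) := by
  have heval (n : ℕ) (y : ℝ) :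
      (((ascPochhammer ℝ n).eval y : ℝ) : ℂ) = (ascPochhammer ℂ n).eval (y : ℂ) := by
    simp [eval_ascPochhammer_eq_prod_range]
  simp [ordinaryHypergeometric_eq_tsum, Complex.ofReal_tsum, heval]

theorem ordinaryHypergeometric_one_half_eq_realGamma (a : ℝ) {c : ℝ} (hc : ∀ k : ℕ, c ≠ -k) :
    ₂F₁ a (1 - a) c (1 / 2 : ℝ) =
      Gamma (c / 2) * Gamma ((c + 1) / 2) / (Gamma ((c + a) / 2) * Gamma ((c + 1 - a) / 2)) := by
  apply Complex.ofReal_injective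
  rw [ofReal_ordinaryHypergeometric]
  push_cast [← Complex.Gamma_ofReal]
  exact ordinaryHypergeometric_one_half_eq_complexGamma a fun k ↦ mod_cast hc k

theorem ordinaryHypergeometric_one_one_half (a : ℝ) :
    ₂F₁ a (1 - a) 1 (1 / 2 : ℝ) = √π / (Gamma ((1 + a) / 2) * Gamma (1 - a / 2)) := by
  have hone (k : ℕ) : (1 : ℝ) ≠ -k := by
    have : (0 : ℝ) ≤ k := k.cast_nonneg
    linarith
  rw [ordinaryHypergeometric_one_half_eq_realGamma a hone, Gamma_one_half_eq, add_self_div_two,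
    Gamma_one, mul_one]
  ring_nf

theorem ordinaryHypergeometric_neg_self_one_one_half (j : ℝ) :
    ₂F₁ (-j) j 1 (1 / 2 : ℝ) =
      √π / 2 * (1 / (Gamma (1 - j / 2) * Gamma ((1 + j) / 2)) +
        1 / (Gamma ((1 - j) / 2) * Gamma (1 + j / 2))) := by
  have hpos := ordinaryHypergeometric_one_one_half j
  have hneg := ordinaryHypergeometric_one_one_half (-j)
  rw [sub_neg_eq_add, ← sub_eq_add_neg, neg_div, sub_neg_eq_add] at hneg
  rw [ordinaryHypergeometric_neg_self j 1 norm_one_half_lt_one,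
    ordinaryHypergeometric_comm (1 - j), hpos, hneg]
  ring

theorem ordinaryHypergeometric_neg_self_one_one_half_pos {j : ℝ} (hj : |j| < 1) :
    0 < ₂F₁ (-j) j 1 (1 / 2 : ℝ) := by
  obtain ⟨hj₁, hj₂⟩ := abs_lt.1 hj
  have hone_sub_half : 0 < 1 - j / 2 := by linarith
  have hone_add_half : 0 < 1 + j / 2 := by linarith
  have hone_add_self : 0 < 1 + j := by linarith
  rw [ordinaryHypergeometric_neg_self_one_one_half]
  positivity

end Gamma

theorem hypergeometric_neg_j_j_one_half_positive_general (j : ℝ) :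
    ₂F₁ (-j) j 1 (1 / 2 : ℝ) =
        1 / 2 * (₂F₁ (1 - j) j 1 (1 / 2 : ℝ) + ₂F₁ (-j) (1 + j) 1 (1 / 2 : ℝ)) ∧
      ₂F₁ (-j) j 1 (1 / 2 : ℝ) =
        √π / 2 * (1 / (Gamma (1 - j / 2) * Gamma ((1 + j) / 2)) +
          1 / (Gamma ((1 - j) / 2) * Gamma (1 + j / 2))) ∧
      (|j| < 1 → 0 < ₂F₁ (-j) j 1 (1 / 2 : ℝ)) :=
  ⟨ordinaryHypergeometric_neg_self j 1 norm_one_half_lt_one,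
    ordinaryHypergeometric_neg_self_one_one_half j,
    ordinaryHypergeometric_neg_self_one_one_half_pos⟩

/-- The contiguous relation at `(a,b,c,t) = (−j, j, 1, 1/2)` together with the evaluations
of `₂F₁(1−j, j; 1; 1/2)` and `₂F₁(−j, 1+j; 1; 1/2)`: for `0 < j < 1`,
`₂F₁(−j, j; 1; 1/2) = (1/2)·(₂F₁(1−j, j; 1; 1/2) + ₂F₁(−j, 1+j; 1; 1/2))
  = (√π/2)·(1/(Γ(1 − j/2)Γ((1+j)/2)) + 1/(Γ((1−j)/2)Γ(1 + j/2)))`,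
and in particular `₂F₁(−j, j; 1; 1/2)` is strictly positive. -/
theorem hypergeometric_neg_j_j_one_half_positive (j : ℝ) (hj0 : 0 < j) (hj1 : j < 1) :
    (∑' n : ℕ, (ascPochhammer ℝ n).eval (-j) * (ascPochhammer ℝ n).eval j /
        ((n.factorial : ℝ)) ^ 2 * (1 / 2) ^ n) =
      (1 / 2) *
        ((∑' n : ℕ, (ascPochhammer ℝ n).eval (1 - j) * (ascPochhammer ℝ n).eval j /
            ((n.factorial : ℝ)) ^ 2 * (1 / 2) ^ n) +
          (∑' n : ℕ, (ascPochhammer ℝ n).eval (-j) * (ascPochhammer ℝ n).eval (1 + j) /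
            ((n.factorial : ℝ)) ^ 2 * (1 / 2) ^ n)) ∧
    (∑' n : ℕ, (ascPochhammer ℝ n).eval (-j) * (ascPochhammer ℝ n).eval j /
        ((n.factorial : ℝ)) ^ 2 * (1 / 2) ^ n) =
      (Real.sqrt π / 2) *
        (1 / (Real.Gamma (1 - j / 2) * Real.Gamma ((1 + j) / 2)) +
          1 / (Real.Gamma ((1 - j) / 2) * Real.Gamma (1 + j / 2))) ∧
    0 < ∑' n : ℕ, (ascPochhammer ℝ n).eval (-j) * (ascPochhammer ℝ n).eval j /
        ((n.factorial : ℝ)) ^ 2 * (1 / 2) ^ n := by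
  simp only [← ordinaryHypergeometric_one_right_eq_tsum]
  obtain ⟨hcontig, hclosed, hpos⟩ := hypergeometric_neg_j_j_one_half_positive_general j
  exact ⟨hcontig, hclosed, hpos (abs_lt.2 ⟨by linarith, hj1⟩)⟩
end
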